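/- Sweeping reversible automata (sRFA) recognize strictly fewer languages than one-way reversible automata with multiple initial states (MRFA): every language recognized by an sRFA is recognized by some MRFA over the same alphabet, and there exists a language (namely a* ∪ b* over the alphabet {a, b}) recognized by some MRFA but by no sRFA. -/

import Mathlib

open scoped Classical

/-- Run a partial transition function along a word. -/
def runP {A Q : Type} (d : A → Q → Option Q) (q : Q) (w : List A) : Option Q :=
  w.foldl (fun o a => o.bind (d a)) (some q)

/-- One-way reversible finite automaton (1RFA): a partial deterministic automaton
with a single initial state and injective transition functions. -/
structure RFA (A Q : Type) where
  start : Q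
  next : A → Q → Option Q
  inj : ∀ a q q' r, next a q = some r → next a q' = some r → q = q'
  accept : Set Q

def RFA.Language {A Q : Type} (M : RFA A Q) : Set (List A) :=
  {w | ∃ qf ∈ M.accept, runP M.next M.start w = some qf}

/-- A permutation automaton (1PerFA): every transition function is a totally
defined bijection. -/
def RFA.IsPerm {A Q : Type} (M : RFA A Q) : Prop :=
  (∀ a q, (M.next a q).isSome) ∧ ∀ a r, ∃ q, M.next a q = some r

/-- One-way reversible finite automaton with multiple initial states (MRFA). -/
structure MRFA (A Q : Type) where
  init : Set Q
  next : A → Q → Option Q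
  inj : ∀ a q q' r, next a q = some r → next a q' = some r → q = q'
  accept : Set Q

def MRFA.Language {A Q : Type} (M : MRFA A Q) : Set (List A) :=
  {w | ∃ q0 ∈ M.init, ∃ qf ∈ M.accept, runP M.next q0 w = some qf}

def Rec1RFA (A : Type) (L : Set (List A)) : Prop :=
  ∃ (Q : Type) (_ : Fintype Q) (M : RFA A Q), M.Language = L

def Rec1RFA1 (A : Type) (L : Set (List A)) : Prop :=
  ∃ (Q : Type) (_ : Fintype Q) (M : RFA A Q), M.accept.ncard = 1 ∧ M.Language = L

def Rec1PerFA (A : Type) (L : Set (List A)) : Prop :=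
  ∃ (Q : Type) (_ : Fintype Q) (M : RFA A Q), M.IsPerm ∧ M.Language = L

def Rec1PerFA1 (A : Type) (L : Set (List A)) : Prop :=
  ∃ (Q : Type) (_ : Fintype Q) (M : RFA A Q),
    M.IsPerm ∧ M.accept.ncard = 1 ∧ M.Language = L

def RecMRFA (A : Type) (L : Set (List A)) : Prop :=
  ∃ (Q : Type) (_ : Fintype Q) (M : MRFA A Q), M.Language = L

/-- Sweeping reversible automaton (sRFA), given without its accepting set:
states `Qp` move rightwards, states `Qm` move leftwards; `startT` is the
transition of the left end-marker function on the initial state, `turnL` its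
restriction to `Qm`, and `turnR` is the transition function at the right
end-marker.  All transition functions are partial and injective, and the left
end-marker function is injective on the whole of `{q₀} ∪ Q₋`. -/
structure SRFA (A Qp Qm : Type) where
  start : Qp
  nextP : A → Qp → Option Qp
  nextM : A → Qm → Option Qm
  startT : Option Qp
  turnL : Qm → Option Qp
  turnR : Qp → Option Qm
  injP : ∀ a q q' r, nextP a q = some r → nextP a q' = some r → q = q'
  injM : ∀ a q q' r, nextM a q = some r → nextM a q' = some r → q = q'
  injL : ∀ q q' r, turnL q = some r → turnL q' = some r → q = q'
  injR : ∀ q q' r, turnR q = some r → turnR q' = some r → q = q'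
  startT_ne_turnL : ∀ q r, startT = some r → turnL q ≠ some r

/-- One step of a sweeping automaton on input `⊢w⊣`: a configuration is a state
together with a head position in `{0, 1, …, |w| + 1}`, where position `0` is the
left end-marker, position `i` with `1 ≤ i ≤ |w|` carries the `i`-th input
symbol, and position `|w| + 1` is the right end-marker.  The result is `none`
when the corresponding transition is undefined and the computation halts. -/
noncomputable def SRFA.step {A Qp Qm : Type} (M : SRFA A Qp Qm) (w : List A) :
    (Qp ⊕ Qm) × ℕ → Option ((Qp ⊕ Qm) × ℕ)
  | (Sum.inl q, i) =>
      if i = 0 then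
        if q = M.start then M.startT.map (fun p => (Sum.inl p, 1)) else none
      else if i = w.length + 1 then
        (M.turnR q).map (fun r => (Sum.inr r, w.length))
      else
        (w[i - 1]?.bind (fun a => M.nextP a q)).map (fun p => (Sum.inl p, i + 1))
  | (Sum.inr q, i) =>
      if i = 0 then (M.turnL q).map (fun p => (Sum.inl p, 1))
      else if i = w.length + 1 then none
      else (w[i - 1]?.bind (fun a => M.nextM a q)).map (fun r => (Sum.inr r, i - 1))

/-- The configuration reached after `n` steps of the computation on `w`,
starting in the initial state at the left end-marker (or `none` if the
computation has halted before). -/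
noncomputable def SRFA.steps {A Qp Qm : Type} (M : SRFA A Qp Qm) (w : List A) :
    ℕ → Option ((Qp ⊕ Qm) × ℕ)
  | 0 => some (Sum.inl M.start, 0)
  | n + 1 => (M.steps w n).bind (M.step w)

/-- Acceptance of an ordinary sRFA: the computation halts at the right
end-marker in an accepting state `q ∈ F ⊆ Q₊`. -/
def SRFA.AcceptsR {A Qp Qm : Type} (M : SRFA A Qp Qm) (F : Set Qp) (w : List A) : Prop :=
  ∃ n q, M.steps w n = some (Sum.inl q, w.length + 1) ∧ q ∈ F ∧
    M.step w (Sum.inl q, w.length + 1) = none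

def SRFA.LangR {A Qp Qm : Type} (M : SRFA A Qp Qm) (F : Set Qp) : Set (List A) :=
  {w | M.AcceptsR F w}

/-- Acceptance of an sRFA with acceptance at both sides: the computation halts
at either end-marker in an accepting state `c ∈ F ⊆ Q₊ ∪ Q₋`. -/
def SRFA.AcceptsB {A Qp Qm : Type} (M : SRFA A Qp Qm) (F : Set (Qp ⊕ Qm)) (w : List A) : Prop :=
  ∃ n c i, M.steps w n = some (c, i) ∧ c ∈ F ∧ (i = 0 ∨ i = w.length + 1) ∧
    M.step w (c, i) = none

def SRFA.LangB {A Qp Qm : Type} (M : SRFA A Qp Qm) (F : Set (Qp ⊕ Qm)) : Set (List A) :=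
  {w | M.AcceptsB F w}

def RecSRFA (A : Type) (L : Set (List A)) : Prop :=
  ∃ (Qp Qm : Type) (_ : Fintype Qp) (_ : Fintype Qm) (M : SRFA A Qp Qm) (F : Set Qp),
    M.LangR F = L

/-- The language `a* ∪ b*` over the two-letter alphabet `{a, b}` (with
`a = false` and `b = true`). -/
def LaStarbStar : Set (List Bool) :=
  {w | ∀ c ∈ w, c = false} ∪ {w | ∀ c ∈ w, c = true}

/-! ### Runs of partial transition functions -/

section Runs

variable {A Q : Type} (d : A → Q → Option Q)

theorem foldl_bind_none (w : List A) :
    w.foldl (fun o a => o.bind (d a)) (none : Option Q) = none := by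
  induction w with
  | nil => rfl
  | cons a w ih => simpa using ih

@[simp] theorem runP_nil (q : Q) : runP d q [] = some q := rfl

theorem runP_cons (q : Q) (a : A) (w : List A) :
    runP d q (a :: w) = (d a q).bind (fun q' => runP d q' w) := by
  unfold runP
  cases h : d a q with
  | none => simpa [h] using foldl_bind_none d w
  | some q' => simp [h]

theorem runP_append (q : Q) (u v : List A) :
    runP d q (u ++ v) = (runP d q u).bind (fun q' => runP d q' v) := by
  induction u generalizing q with
  | nil => simp
  | cons a u ih =>
    rw [List.cons_append, runP_cons, runP_cons]
    cases d a q with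
    | none => rfl
    | some q' => exact ih q'

/-- A run is the same as a sequence of states linked by transitions. -/
theorem runP_eq_some_iff (q t : Q) (w : List A) :
    runP d q w = some t ↔ ∃ f : ℕ → Q, f 0 = q ∧ f w.length = t ∧
      ∀ i a, w[i]? = some a → d a (f i) = some (f (i + 1)) := by
  induction w generalizing q with
  | nil =>
    constructor
    · intro h
      exact ⟨fun _ => q, rfl, by simpa using h, by simp⟩
    · rintro ⟨f, h0, h1, -⟩
      simp only [List.length_nil] at h1
      simp [← h0, h1]
  | cons a w ih =>
    rw [runP_cons]
    constructor
    · intro h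
      obtain ⟨q', hq', h⟩ := Option.bind_eq_some_iff.1 h
      obtain ⟨f, h0, h1, hf⟩ := (ih q').1 h
      refine ⟨fun n => Nat.casesOn n q f, rfl, h1, ?_⟩
      rintro (_ | i) b hb
      · obtain rfl : a = b := by simpa using hb
        simpa [h0] using hq'
      · exact hf i b (by simpa using hb)
    · rintro ⟨f, h0, h1, hf⟩
      refine Option.bind_eq_some_iff.2 ⟨f 1, h0 ▸ hf 0 a rfl, ?_⟩
      exact (ih _).2 ⟨fun i => f (i + 1), rfl, h1, fun i b hb => hf (i + 1) b (by simpa using hb)⟩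

/-- A finite partial injection iterated `(card Q)!` times is a partial identity. -/
theorem runP_replicate_factorial [Fintype Q]
    (hd : ∀ a q q' r, d a q = some r → d a q' = some r → q = q') (a : A) {q t : Q}
    (h : runP d q (List.replicate (Fintype.card Q).factorial a) = some t) : t = q := by
  obtain ⟨f, h0, h1, hf⟩ := (runP_eq_some_iff d q t _).1 h
  rw [List.length_replicate] at h1
  set N := (Fintype.card Q).factorial
  have hcard : Fintype.card Q ≤ N := Nat.self_le_factorial _
  have hstep : ∀ i, i < N → d a (f i) = some (f (i + 1)) := fun i hi =>
    hf i a (by simp [hi])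
  obtain ⟨x, y, hxy, hfxy⟩ := Fintype.exists_ne_map_eq_of_card_lt
    (fun i : Fin (Fintype.card Q + 1) => f i) (by simp)
  wlog hlt : x < y generalizing x y
  · exact this y x hxy.symm hfxy.symm (lt_of_le_of_ne (not_lt.1 hlt) hxy.symm)
  have hback : ∀ i k, i + k ≤ Fintype.card Q → f i = f (i + k) → f 0 = f k := by
    intro i k
    induction i with
    | zero => intro _ h; simpa using h
    | succ i ih =>
      intro hle heq
      refine ih (by omega) (hd a _ _ _ (hstep i (by omega)) ?_)
      rw [heq, hstep (i + k) (by omega), Nat.add_right_comm]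
  obtain ⟨k, hk⟩ := Nat.exists_eq_add_of_lt (Fin.lt_def.1 hlt)
  have hk' : (y : ℕ) = x + (k + 1) := by omega
  have hy := y.isLt
  have hper0 : f 0 = f (k + 1) := hback x (k + 1) (by omega) (by rw [← hk']; exact hfxy)
  have hper : ∀ i, i + (k + 1) ≤ N → f i = f (i + (k + 1)) := by
    intro i
    induction i with
    | zero => intro _; simpa using hper0
    | succ i ih =>
      intro hle
      have e1 := hstep i (by omega)
      have e2 := hstep (i + (k + 1)) (by omega)
      rw [← ih (by omega), e1, Nat.add_right_comm] at e2
      exact Option.some.inj e2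
  have hmul : ∀ m, m * (k + 1) ≤ N → f (m * (k + 1)) = f 0 := by
    intro m
    induction m with
    | zero => simp
    | succ m ih =>
      intro hle
      rw [Nat.succ_mul] at hle ⊢
      rw [← hper _ hle]
      exact ih (by omega)
  obtain ⟨m, hm⟩ : (k + 1) ∣ N := Nat.dvd_factorial (by omega) (by omega)
  rw [mul_comm] at hm
  rw [← h1, ← h0, hm]
  exact hmul m hm.ge

end Runs

/-! ### Computations of sweeping automata -/

namespace SRFA

variable {A Qp Qm : Type} (M : SRFA A Qp Qm)

theorem step_start (w : List A) :
    M.step w (Sum.inl M.start, 0) = M.startT.map (fun p => (Sum.inl p, 1)) := by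
  simp [step]

theorem step_inl {w : List A} {i : ℕ} {a : A} (h : w[i]? = some a) (q : Qp) :
    M.step w (Sum.inl q, i + 1) = (M.nextP a q).map (fun p => (Sum.inl p, i + 2)) := by
  have := (List.getElem?_eq_some_iff.1 h).1
  simp [step, h, this.ne]

theorem step_turnR (w : List A) (q : Qp) :
    M.step w (Sum.inl q, w.length + 1) = (M.turnR q).map (fun r => (Sum.inr r, w.length)) := by
  simp [step]

theorem step_turnL (w : List A) (r : Qm) :
    M.step w (Sum.inr r, 0) = (M.turnL r).map (fun p => (Sum.inl p, 1)) := by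
  simp [step]

theorem step_inr {w : List A} {i : ℕ} {a : A} (h : w[i]? = some a) (r : Qm) :
    M.step w (Sum.inr r, i + 1) = (M.nextM a r).map (fun p => (Sum.inr p, i)) := by
  have := (List.getElem?_eq_some_iff.1 h).1
  simp [step, h, this.ne]

/-- The possible forms of a single step. -/
theorem step_cases {w : List A} {c e : (Qp ⊕ Qm) × ℕ} (h : M.step w c = some e) :
    (∃ p, c = (Sum.inl M.start, 0) ∧ M.startT = some p ∧ e = (Sum.inl p, 1)) ∨
    (∃ i a q p, w[i]? = some a ∧ c = (Sum.inl q, i + 1) ∧ M.nextP a q = some p ∧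
      e = (Sum.inl p, i + 2)) ∨
    (∃ q r, c = (Sum.inl q, w.length + 1) ∧ M.turnR q = some r ∧ e = (Sum.inr r, w.length)) ∨
    (∃ r p, c = (Sum.inr r, 0) ∧ M.turnL r = some p ∧ e = (Sum.inl p, 1)) ∨
    (∃ i a r r', w[i]? = some a ∧ c = (Sum.inr r, i + 1) ∧ M.nextM a r = some r' ∧
      e = (Sum.inr r', i)) := by
  obtain ⟨q | r, _ | i⟩ := c
  · left
    simp only [step, if_true] at h
    split_ifs at h with hq
    obtain ⟨p, hp, rfl⟩ := Option.map_eq_some_iff.1 h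
    exact ⟨p, by rw [hq], hp, rfl⟩
  · right
    simp only [step, Nat.add_eq_zero_iff, one_ne_zero, and_false, if_false,
      Nat.add_sub_cancel] at h
    split_ifs at h with hi
    · right; left
      obtain ⟨r, hr, rfl⟩ := Option.map_eq_some_iff.1 h
      exact ⟨q, r, by rw [hi], hr, rfl⟩
    · left
      obtain ⟨p, hp, rfl⟩ := Option.map_eq_some_iff.1 h
      obtain ⟨a, ha, hp⟩ := Option.bind_eq_some_iff.1 hp
      exact ⟨i, a, q, p, ha, rfl, hp, rfl⟩
  · right; right; right; left
    obtain ⟨p, hp, rfl⟩ := Option.map_eq_some_iff.1 ((M.step_turnL w r).symm.trans h)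
    exact ⟨r, p, rfl, hp, rfl⟩
  · right; right; right; right
    simp only [step, Nat.add_eq_zero_iff, one_ne_zero, and_false, if_false,
      Nat.add_sub_cancel] at h
    split_ifs at h with hi
    obtain ⟨p, hp, rfl⟩ := Option.map_eq_some_iff.1 h
    obtain ⟨a, ha, hp⟩ := Option.bind_eq_some_iff.1 hp
    exact ⟨i, a, r, p, ha, rfl, hp, rfl⟩

theorem step_injective {w : List A} {c c' e : (Qp ⊕ Qm) × ℕ} (h : M.step w c = some e)
    (h' : M.step w c' = some e) : c = c' := by
  have hlen : ∀ {i : ℕ} {a : A}, w[i]? = some a → i < w.length := fun h =>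
    (List.getElem?_eq_some_iff.1 h).1
  rcases M.step_cases h with ⟨p, rfl, hp, rfl⟩ | ⟨i, a, q, p, ha, rfl, hp, rfl⟩ |
      ⟨q, r, rfl, hp, rfl⟩ | ⟨r, p, rfl, hp, rfl⟩ | ⟨i, a, r, p, ha, rfl, hp, rfl⟩ <;>
    rcases M.step_cases h' with ⟨p', rfl, hp', he⟩ | ⟨i', a', q', p', ha', rfl, hp', he⟩ |
      ⟨q', r', rfl, hp', he⟩ | ⟨r', p', rfl, hp', he⟩ | ⟨i', a', r', p', ha', rfl, hp', he⟩ <;>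
    simp only [Prod.mk.injEq, Sum.inl.injEq, Sum.inr.injEq, reduceCtorEq, false_and, and_true,
      Nat.add_right_cancel_iff] at he
  · rfl
  · omega
  · subst he
    exact absurd hp' (M.startT_ne_turnL _ _ hp)
  · omega
  · obtain ⟨rfl, rfl⟩ := he
    obtain rfl := Option.some.inj (ha.symm.trans ha')
    rw [M.injP _ _ _ _ hp hp']
  · omega
  · subst he
    rw [M.injR _ _ _ hp hp']
  · have := hlen ha'
    omega
  · subst he
    exact absurd hp (M.startT_ne_turnL _ _ hp')
  · omega
  · subst he
    rw [M.injL _ _ _ hp hp']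
  · have := hlen ha
    omega
  · obtain ⟨rfl, rfl⟩ := he
    obtain rfl := Option.some.inj (ha.symm.trans ha')
    rw [M.injM _ _ _ _ hp hp']

theorem step_ne_start {w : List A} {c : (Qp ⊕ Qm) × ℕ} :
    M.step w c ≠ some (Sum.inl M.start, 0) := by
  intro h
  rcases M.step_cases h with ⟨p, -, -, he⟩ | ⟨i, a, q, p, -, -, -, he⟩ |
    ⟨q, r, -, -, he⟩ | ⟨r, p, -, -, he⟩ | ⟨i, a, r, p, -, -, -, he⟩ <;> simp at he

theorem position_le_of_step {w : List A} {c e : (Qp ⊕ Qm) × ℕ} (h : M.step w c = some e) :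
    e.2 ≤ w.length + 1 := by
  have hlen : ∀ {i : ℕ} {a : A}, w[i]? = some a → i < w.length := fun h =>
    (List.getElem?_eq_some_iff.1 h).1
  rcases M.step_cases h with ⟨p, -, -, rfl⟩ | ⟨i, a, q, p, ha, -, -, rfl⟩ |
    ⟨q, r, -, -, rfl⟩ | ⟨r, p, -, -, rfl⟩ | ⟨i, a, r, p, ha, -, -, rfl⟩
  · simp
  · have := hlen ha; simp; omega
  · simp
  · simp
  · have := hlen ha; simp; omega

theorem steps_injective {w : List A} : ∀ {m n : ℕ} {c : (Qp ⊕ Qm) × ℕ},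
    M.steps w m = some c → M.steps w n = some c → m = n
  | 0, 0, _, _, _ => rfl
  | 0, n + 1, c, h, h' => by
    obtain ⟨b, -, hb⟩ := Option.bind_eq_some_iff.1 h'
    obtain rfl := Option.some.inj h
    exact absurd hb M.step_ne_start
  | m + 1, 0, c, h, h' => by
    obtain ⟨b, -, hb⟩ := Option.bind_eq_some_iff.1 h
    obtain rfl := Option.some.inj h'
    exact absurd hb M.step_ne_start
  | m + 1, n + 1, c, h, h' => by
    obtain ⟨b, hb, hbc⟩ := Option.bind_eq_some_iff.1 h
    obtain ⟨b', hb', hbc'⟩ := Option.bind_eq_some_iff.1 h'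
    obtain rfl := M.step_injective hbc hbc'
    rw [steps_injective hb hb']

theorem position_le_of_steps {w : List A} {n : ℕ} {c : (Qp ⊕ Qm) × ℕ}
    (h : M.steps w n = some c) : c.2 ≤ w.length + 1 := by
  cases n with
  | zero => obtain rfl := Option.some.inj h; simp
  | succ n =>
    obtain ⟨b, -, hb⟩ := Option.bind_eq_some_iff.1 h
    exact M.position_le_of_step hb

/-- By reversibility every computation halts. -/
theorem exists_halting [Finite Qp] [Finite Qm] (w : List A) :
    ∃ n c, M.steps w n = some c ∧ M.step w c = none := by
  by_contra! hcon
  have hall : ∀ n, ∃ c, M.steps w n = some c := by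
    intro n
    induction n with
    | zero => exact ⟨_, rfl⟩
    | succ n ih =>
      obtain ⟨c, hc⟩ := ih
      obtain ⟨e, he⟩ := Option.ne_none_iff_exists'.1 (hcon n c hc)
      exact ⟨e, Option.bind_eq_some_iff.2 ⟨c, hc, he⟩⟩
  choose c hc using hall
  have hinj : Function.Injective
      (fun n => ((c n).1, (⟨(c n).2, Nat.lt_succ_of_le (M.position_le_of_steps (hc n))⟩ :
        Fin (w.length + 2)))) := by
    intro m n hmn
    simp only [Prod.mk.injEq, Fin.mk.injEq] at hmn
    exact M.steps_injective (hc m) ((hc n).trans (by rw [Prod.ext hmn.1 hmn.2]))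
  exact not_injective_infinite_finite _ hinj

theorem steps_eq_none_of_le {w : List A} {m n : ℕ} (hmn : m ≤ n) (h : M.steps w m = none) :
    M.steps w n = none := by
  induction n, hmn using Nat.le_induction with
  | base => exact h
  | succ n _ ih => simp [steps, ih]

/-- Every configuration of a halting computation is the last one or has a successor. -/
theorem eq_or_exists_step {w : List A} {n N : ℕ} {c e : (Qp ⊕ Qm) × ℕ}
    (hN : M.steps w N = some c) (hc : M.step w c = none) (hn : M.steps w n = some e) :
    e = c ∨ ∃ e', M.step w e = some e' ∧ M.steps w (n + 1) = some e' := by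
  have hsucc : M.steps w (n + 1) = M.step w e := by simp [steps, hn]
  rcases lt_trichotomy n N with hlt | rfl | hlt
  · right
    cases he : M.step w e with
    | none =>
      rw [M.steps_eq_none_of_le (Nat.succ_le_of_lt hlt) (hsucc.trans he)] at hN
      cases hN
    | some e' => exact ⟨e', rfl, hsucc.trans he⟩
  · exact Or.inl (Option.some.inj (hn.symm.trans hN))
  · have : M.steps w (N + 1) = none := by simp [steps, hN, hc]
    rw [M.steps_eq_none_of_le (Nat.succ_le_of_lt hlt) this] at hn
    cases hn

/-! ### Simulation by an automaton with multiple initial states -/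

/-- Both components of the crossing sets are carried bijectively over the symbol `a`: the
right-moving states forwards and the left-moving states backwards. -/
def Cross (a : A) (s t : Set Qp × Set Qm) : Prop :=
  (∀ p ∈ s.1, ∃ p' ∈ t.1, M.nextP a p = some p') ∧
  (∀ p' ∈ t.1, ∃ p ∈ s.1, M.nextP a p = some p') ∧
  (∀ r' ∈ t.2, ∃ r ∈ s.2, M.nextM a r' = some r) ∧
  (∀ r ∈ s.2, ∃ r' ∈ t.2, M.nextM a r' = some r)

variable {M}

theorem Cross.right_unique {a : A} {s t t' : Set Qp × Set Qm} (h : M.Cross a s t)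
    (h' : M.Cross a s t') : t ≤ t' := by
  obtain ⟨-, h2, h3, -⟩ := h
  obtain ⟨h1', -, -, h4'⟩ := h'
  constructor
  · intro p' hp'
    obtain ⟨p, hp, e⟩ := h2 p' hp'
    obtain ⟨p'', hp'', e'⟩ := h1' p hp
    exact Option.some.inj (e.symm.trans e') ▸ hp''
  · intro r' hr'
    obtain ⟨r, hr, e⟩ := h3 r' hr'
    obtain ⟨r'', hr'', e'⟩ := h4' r hr
    exact M.injM _ _ _ _ e e' ▸ hr''

theorem Cross.left_unique {a : A} {s s' t : Set Qp × Set Qm} (h : M.Cross a s t)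
    (h' : M.Cross a s' t) : s ≤ s' := by
  obtain ⟨h1, -, -, h4⟩ := h
  obtain ⟨-, h2', h3', -⟩ := h'
  constructor
  · intro p hp
    obtain ⟨p', hp', e⟩ := h1 p hp
    obtain ⟨p'', hp'', e'⟩ := h2' p' hp'
    exact M.injP _ _ _ _ e e' ▸ hp''
  · intro r hr
    obtain ⟨r', hr', e⟩ := h4 r hr
    obtain ⟨r'', hr'', e'⟩ := h3' r' hr'
    exact Option.some.inj (e.symm.trans e') ▸ hr''

theorem Cross.restrict {a : A} {s s' t : Set Qp × Set Qm} (h : M.Cross a s t) (hs : s' ≤ s) :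
    ∃ t' ≤ t, M.Cross a s' t' := by
  obtain ⟨h1, h2, h3, h4⟩ := h
  refine ⟨({p' ∈ t.1 | ∃ p ∈ s'.1, M.nextP a p = some p'},
    {r' ∈ t.2 | ∃ r ∈ s'.2, M.nextM a r' = some r}), ⟨fun _ h => h.1, fun _ h => h.1⟩,
    fun p hp => ?_, fun p' hp' => hp'.2, fun r' hr' => hr'.2, fun r hr => ?_⟩
  · obtain ⟨p', hp', e⟩ := h1 p (hs.1 hp)
    exact ⟨p', ⟨hp', p, hp, e⟩, e⟩
  · obtain ⟨r', hr', e⟩ := h4 r (hs.2 hr)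
    exact ⟨r', ⟨hr', r, hr, e⟩, e⟩

variable (M)

/-- The partial function whose graph is `Cross`. -/
noncomputable def crossNext (a : A) (s : Set Qp × Set Qm) : Option (Set Qp × Set Qm) :=
  if h : ∃ t, M.Cross a s t then some h.choose else none

theorem crossNext_eq_some_iff {a : A} {s t : Set Qp × Set Qm} :
    M.crossNext a s = some t ↔ M.Cross a s t := by
  unfold crossNext
  constructor
  · intro h
    split_ifs at h with hex
    exact Option.some.inj h ▸ hex.choose_spec
  · intro h
    have hex : ∃ t, M.Cross a s t := ⟨t, h⟩
    rw [dif_pos hex]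
    exact congrArg some
      (le_antisymm (hex.choose_spec.right_unique h) (h.right_unique hex.choose_spec))

/-- The automaton guessing the sets of states in which the sweeping automaton crosses each
boundary between tape cells, rightwards and leftwards. -/
noncomputable def crossMRFA (F : Set Qp) : MRFA A (Set Qp × Set Qm) where
  init := {s | (∃ p ∈ s.1, M.startT = some p) ∧ ∀ r ∈ s.2, ∃ p ∈ s.1, M.turnL r = some p}
  next := M.crossNext
  inj a s s' t h h' := by
    rw [crossNext_eq_some_iff] at h h'
    exact le_antisymm (h.left_unique h') (h'.left_unique h)
  accept := {s | ∀ p ∈ s.1, (M.turnR p = none ∧ p ∈ F) ∨ ∃ r ∈ s.2, M.turnR p = some r}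

theorem inf_mem_init {F : Set Qp} {s t : Set Qp × Set Qm} (hs : s ∈ (M.crossMRFA F).init)
    (ht : t ∈ (M.crossMRFA F).init) : s ⊓ t ∈ (M.crossMRFA F).init := by
  obtain ⟨⟨p, hp, e⟩, h⟩ := hs
  obtain ⟨⟨p', hp', e'⟩, h'⟩ := ht
  refine ⟨⟨p, ⟨hp, Option.some.inj (e'.symm.trans e) ▸ hp'⟩, e⟩, fun r hr => ?_⟩
  obtain ⟨p, hp, e⟩ := h r hr.1
  obtain ⟨p', hp', e'⟩ := h' r hr.2
  exact ⟨p, ⟨hp, Option.some.inj (e'.symm.trans e) ▸ hp'⟩, e⟩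

theorem inf_mem_accept {F : Set Qp} {s t : Set Qp × Set Qm} (hs : s ∈ (M.crossMRFA F).accept)
    (ht : t ∈ (M.crossMRFA F).accept) : s ⊓ t ∈ (M.crossMRFA F).accept := by
  intro p hp
  rcases hs p hp.1 with h | ⟨r, hr, e⟩
  · exact Or.inl h
  · rcases ht p hp.2 with ⟨h, -⟩ | ⟨r', hr', e'⟩
    · rw [h] at e
      cases e
    · exact Or.inr ⟨r, ⟨hr, Option.some.inj (e'.symm.trans e) ▸ hr'⟩, e⟩

theorem exists_runP_of_le {s s' t : Set Qp × Set Qm} {w : List A}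
    (h : runP M.crossNext s w = some t) (hs : s' ≤ s) :
    ∃ t', runP M.crossNext s' w = some t' := by
  induction w generalizing s s' with
  | nil => exact ⟨s', rfl⟩
  | cons a w ih =>
    rw [runP_cons] at h ⊢
    obtain ⟨u, hu, h⟩ := Option.bind_eq_some_iff.1 h
    obtain ⟨u', hle, hu'⟩ := (M.crossNext_eq_some_iff.1 hu).restrict hs
    rw [M.crossNext_eq_some_iff.2 hu']
    exact ih h hle

theorem mem_language_of_acceptsR {F : Set Qp} {w : List A} (h : M.AcceptsR F w) :
    w ∈ (M.crossMRFA F).Language := by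
  obtain ⟨N, qf, hN, hqf, hhalt⟩ := h
  have hlen : ∀ {i : ℕ} {a : A}, w[i]? = some a → i < w.length := fun h =>
    (List.getElem?_eq_some_iff.1 h).1
  have hnext : ∀ {n e}, M.steps w n = some e → e ≠ (Sum.inl qf, w.length + 1) →
      ∃ e', M.step w e = some e' ∧ M.steps w (n + 1) = some e' := fun hn hne =>
    (M.eq_or_exists_step hN hhalt hn).resolve_left hne
  let f : ℕ → Set Qp × Set Qm := fun i =>
    ({q | ∃ n, M.steps w n = some (Sum.inl q, i + 1)}, {r | ∃ n, M.steps w n = some (Sum.inr r, i)})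
  refine ⟨f 0, ⟨?_, ?_⟩, f w.length, ?_,
    (runP_eq_some_iff _ _ _ _).2 ⟨f, rfl, rfl, fun i a ha => M.crossNext_eq_some_iff.2
      ⟨?_, ?_, ?_, ?_⟩⟩⟩
  · obtain ⟨e, he, hs⟩ := hnext (n := 0) rfl (by simp)
    rw [step_start] at he
    obtain ⟨p, hp, rfl⟩ := Option.map_eq_some_iff.1 he
    exact ⟨p, ⟨_, hs⟩, hp⟩
  · rintro r ⟨n, hn⟩
    obtain ⟨e, he, hs⟩ := hnext hn (by simp)
    rw [step_turnL] at he
    obtain ⟨p, hp, rfl⟩ := Option.map_eq_some_iff.1 he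
    exact ⟨p, ⟨_, hs⟩, hp⟩
  · rintro p ⟨n, hn⟩
    rcases M.eq_or_exists_step hN hhalt hn with heq | ⟨e, he, hs⟩
    · left
      obtain rfl : p = qf := by simpa using heq
      rw [step_turnR] at hhalt
      exact ⟨Option.map_eq_none_iff.1 hhalt, hqf⟩
    · right
      rw [step_turnR] at he
      obtain ⟨r, hr, rfl⟩ := Option.map_eq_some_iff.1 he
      exact ⟨r, ⟨_, hs⟩, hr⟩
  · rintro p ⟨n, hn⟩
    have := hlen ha
    obtain ⟨e, he, hs⟩ := hnext hn (by simp; omega)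
    rw [M.step_inl ha] at he
    obtain ⟨p', hp', rfl⟩ := Option.map_eq_some_iff.1 he
    exact ⟨p', ⟨_, hs⟩, hp'⟩
  · rintro p' ⟨_ | n, hn⟩
    · simp [steps] at hn
    · obtain ⟨c, hc, hstep⟩ := Option.bind_eq_some_iff.1 hn
      rcases M.step_cases hstep with ⟨p, -, -, he⟩ | ⟨j, b, q, p, hb, rfl, hq, he⟩ |
        ⟨q, r, -, -, he⟩ | ⟨r, p, -, -, he⟩ | ⟨j, b, r, p, -, -, -, he⟩ <;>
        simp only [Prod.mk.injEq, Sum.inl.injEq, reduceCtorEq, false_and] at he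
      · omega
      · obtain ⟨rfl, hij⟩ := he
        obtain rfl : i = j := by omega
        obtain rfl := Option.some.inj (ha.symm.trans hb)
        exact ⟨q, ⟨n, hc⟩, hq⟩
      · omega
  · rintro r ⟨n, hn⟩
    obtain ⟨e, he, hs⟩ := hnext hn (by simp)
    rw [M.step_inr ha] at he
    obtain ⟨r', hr', rfl⟩ := Option.map_eq_some_iff.1 he
    exact ⟨r', ⟨_, hs⟩, hr'⟩
  · rintro r' ⟨_ | n, hn⟩
    · simp [steps] at hn
    · obtain ⟨c, hc, hstep⟩ := Option.bind_eq_some_iff.1 hn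
      have := hlen ha
      rcases M.step_cases hstep with ⟨p, -, -, he⟩ | ⟨j, b, q, p, hb, rfl, hq, he⟩ |
        ⟨q, r, -, -, he⟩ | ⟨r, p, -, -, he⟩ | ⟨j, b, r, p, hb, rfl, hr, he⟩ <;>
        simp only [Prod.mk.injEq, Sum.inr.injEq, reduceCtorEq, false_and] at he
      · omega
      · obtain ⟨rfl, rfl⟩ := he
        obtain rfl := Option.some.inj (ha.symm.trans hb)
        exact ⟨r, ⟨n, hc⟩, hr⟩

theorem acceptsR_of_mem_language [Finite Qp] [Finite Qm] {F : Set Qp} {w : List A}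
    (h : w ∈ (M.crossMRFA F).Language) : M.AcceptsR F w := by
  obtain ⟨s, ⟨⟨p₀, hp₀, hstart⟩, hinit⟩, t, hacc, hrun⟩ := h
  obtain ⟨f, rfl, rfl, hf⟩ := (runP_eq_some_iff _ _ _ _).1 hrun
  replace hf : ∀ i a, w[i]? = some a → M.Cross a (f i) (f (i + 1)) := fun i a ha =>
    M.crossNext_eq_some_iff.1 (hf i a ha)
  let Inv : (Qp ⊕ Qm) × ℕ → Prop := fun c =>
    c = (Sum.inl M.start, 0) ∨ (∃ i ≤ w.length, ∃ q ∈ (f i).1, c = (Sum.inl q, i + 1)) ∨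
      ∃ i ≤ w.length, ∃ r ∈ (f i).2, c = (Sum.inr r, i)
  have key : ∀ c, Inv c → (∃ e, M.step w c = some e ∧ Inv e) ∨
      ∃ q ∈ F, c = (Sum.inl q, w.length + 1) := by
    rintro c (rfl | ⟨i, hi, q, hq, rfl⟩ | ⟨i, hi, r, hr, rfl⟩)
    · left
      exact ⟨(Sum.inl p₀, 1), by rw [step_start, hstart]; rfl,
        Or.inr (Or.inl ⟨0, Nat.zero_le _, p₀, hp₀, rfl⟩)⟩
    · rcases hi.eq_or_lt with rfl | hlt
      · rcases hacc q hq with ⟨-, hF⟩ | ⟨r, hr, e⟩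
        · exact Or.inr ⟨q, hF, rfl⟩
        · left
          exact ⟨(Sum.inr r, w.length), by rw [step_turnR, e]; rfl,
            Or.inr (Or.inr ⟨_, le_rfl, r, hr, rfl⟩)⟩
      · left
        have ha := List.getElem?_eq_getElem hlt
        obtain ⟨p', hp', e⟩ := (hf i _ ha).1 q hq
        exact ⟨(Sum.inl p', i + 2), by rw [M.step_inl ha, e]; rfl,
          Or.inr (Or.inl ⟨i + 1, hlt, p', hp', rfl⟩)⟩
    · left
      cases i with
      | zero =>
        obtain ⟨p, hp, e⟩ := hinit r hr
        exact ⟨(Sum.inl p, 1), by rw [step_turnL, e]; rfl,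
          Or.inr (Or.inl ⟨0, Nat.zero_le _, p, hp, rfl⟩)⟩
      | succ i =>
        have ha := List.getElem?_eq_getElem (Nat.lt_of_succ_le hi)
        obtain ⟨r', hr', e⟩ := (hf i _ ha).2.2.1 r hr
        exact ⟨(Sum.inr r', i), by rw [M.step_inr ha, e]; rfl,
          Or.inr (Or.inr ⟨i, by omega, r', hr', rfl⟩)⟩
  have hinv : ∀ n c, M.steps w n = some c → Inv c := by
    intro n
    induction n with
    | zero => intro c hc; exact Or.inl (Option.some.inj hc).symm
    | succ n ih =>
      intro c hc
      obtain ⟨b, hb, hbc⟩ := Option.bind_eq_some_iff.1 hc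
      rcases key b (ih b hb) with ⟨e, he, hI⟩ | ⟨q, -, rfl⟩
      · exact Option.some.inj (he.symm.trans hbc) ▸ hI
      · rcases ih _ hb with hbad | ⟨i, hi, q', hq', heq⟩ | ⟨i, hi, r, hr, heq⟩
        · simp at hbad
        · simp only [Prod.mk.injEq, Sum.inl.injEq, Nat.add_right_cancel_iff] at heq
          obtain ⟨rfl, rfl⟩ := heq
          rw [step_turnR] at hbc
          rcases hacc q hq' with ⟨hnone, -⟩ | ⟨r, hr, e⟩
          · rw [hnone] at hbc
            cases hbc
          · rw [e] at hbc
            exact Option.some.inj hbc ▸ Or.inr (Or.inr ⟨_, le_rfl, r, hr, rfl⟩)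
        · simp at heq
  obtain ⟨n, c, hn, hc⟩ := M.exists_halting w
  rcases key c (hinv n c hn) with ⟨e, he, -⟩ | ⟨q, hq, rfl⟩
  · rw [hc] at he
    cases he
  · exact ⟨n, q, hn, hq, hc⟩

theorem crossMRFA_language [Finite Qp] [Finite Qm] (F : Set Qp) :
    (M.crossMRFA F).Language = M.LangR F :=
  Set.ext fun _ => ⟨M.acceptsR_of_mem_language, M.mem_language_of_acceptsR⟩

/-- If a sweeping automaton accepts all powers of `a` and of `b`, then it accepts some word
`aᴺbᴺ` with `N > 0`. -/
theorem exists_replicate_append_mem_langR [Finite Qp] [Finite Qm] (F : Set Qp) {a b : A}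
    (ha : ∀ n, List.replicate n a ∈ M.LangR F) (hb : ∀ n, List.replicate n b ∈ M.LangR F) :
    ∃ N > 0, List.replicate N a ++ List.replicate N b ∈ M.LangR F := by
  have := Fintype.ofFinite (Set Qp × Set Qm)
  rw [← M.crossMRFA_language F] at ha hb ⊢
  set N := (Fintype.card (Set Qp × Set Qm)).factorial
  have hid : ∀ {c : A} {q t}, runP M.crossNext q (List.replicate N c) = some t → t = q :=
    fun h => runP_replicate_factorial _ (M.crossMRFA F).inj _ h
  obtain ⟨s, hs, s', hs', hsr⟩ := ha N
  obtain ⟨t, ht, t', ht', htr⟩ := hb N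
  obtain rfl := hid hsr
  obtain rfl := hid htr
  obtain ⟨u, hu⟩ := M.exists_runP_of_le hsr (inf_le_left : s' ⊓ t' ≤ s')
  obtain ⟨v, hv⟩ := M.exists_runP_of_le htr (inf_le_right : s' ⊓ t' ≤ t')
  obtain rfl := hid hu
  obtain rfl := hid hv
  refine ⟨N, Nat.factorial_pos _, s' ⊓ t', M.inf_mem_init hs ht, s' ⊓ t',
    M.inf_mem_accept hs' ht', ?_⟩
  change runP M.crossNext _ _ = _
  rw [runP_append, hu]
  exact hv

end SRFA

/-! ### The language `a* ∪ b*` -/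

/-- The automaton with one initial state looping on each letter. -/
def loopMRFA : MRFA Bool Bool where
  init := Set.univ
  next a q := if q = a then some q else none
  inj a q q' r h h' := by
    split_ifs at h h' with e e'
    exact e.trans e'.symm
  accept := Set.univ

theorem runP_loopMRFA (q t : Bool) (w : List Bool) :
    runP loopMRFA.next q w = some t ↔ t = q ∧ ∀ c ∈ w, c = q := by
  induction w with
  | nil => simp [eq_comm]
  | cons a w ih =>
    rw [runP_cons]
    by_cases h : q = a
    · subst h
      simpa [loopMRFA] using ih
    · simp [loopMRFA, h, Ne.symm h]

theorem loopMRFA_language : loopMRFA.Language = LaStarbStar := by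
  ext w
  have huniv : ∀ q, q ∈ loopMRFA.init ∧ q ∈ loopMRFA.accept := fun _ => ⟨trivial, trivial⟩
  simp [MRFA.Language, LaStarbStar, runP_loopMRFA, huniv]

/-- sRFA recognize strictly fewer languages than MRFA: every sRFA
language is an MRFA language over the same alphabet, and `a* ∪ b*` is an MRFA
language which is not an sRFA language. -/
theorem stmt12 :
    (∀ (A : Type) (L : Set (List A)), RecSRFA A L → RecMRFA A L) ∧
    RecMRFA Bool LaStarbStar ∧ ¬ RecSRFA Bool LaStarbStar := by
  refine ⟨?_, ⟨Bool, inferInstance, loopMRFA, loopMRFA_language⟩, ?_⟩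
  · rintro A L ⟨Qp, Qm, _, _, M, F, rfl⟩
    exact ⟨Set Qp × Set Qm, Fintype.ofFinite _, M.crossMRFA F, M.crossMRFA_language F⟩
  · rintro ⟨Qp, Qm, _, _, M, F, hL⟩
    obtain ⟨N, hN, hmem⟩ := M.exists_replicate_append_mem_langR F (a := false) (b := true)
      (fun n => hL ▸ Or.inl fun c hc => List.eq_of_mem_replicate hc)
      (fun n => hL ▸ Or.inr fun c hc => List.eq_of_mem_replicate hc)
    rw [hL] at hmem
    rcases hmem with h | h
    · exact absurd (h true (by simp [hN.ne'])) (by simp)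
    · exact absurd (h false (by simp [hN.ne'])) (by simp)
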